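/- Fix 3×3 complex matrices z (line impedance) and real bounds v̲, v̄ ∈ ℝ³. A tuple of 3×3 complex matrices (v_i, v_j, S, ℓ), with v_i, v_j, ℓ Hermitian, satisfies the branch-flow-model constraints on a three-phase line — namely (i) v_j = v_i − (S·zᴴ + Sᴴ·z) + z·ℓ·zᴴ, (ii) v̲ ≤ diag(v_i) ≤ v̄ entrywise, (iii) [[v_i, S],[Sᴴ, ℓ]] ⪰ 0, and (iv) rank [[v_i, S],[Sᴴ, ℓ]] = 1 — if and only if the transformed tuple (Aᴴv_iA, Aᴴv_jA, AᴴSA, AᴴℓA) satisfies the symmetrical-component constraints — namely (i') the same KVL equation with z replaced by AᴴzA, (ii') v̲ ≤ diag(A·(Aᴴv_iA)·Aᴴ) ≤ v̄ entrywise, (iii') the corresponding 6×6 block matrix is positive semidefinite, and (iv') it has rank 1. Hence the map X ↦ AᴴXA is a bijection between the feasible sets of the BFM-SDP line constraints and the symmetrical SDP line constraints. -/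

import Mathlib

/-!
The matrix `symA` is unitary, so `X ↦ symAᴴ * X * symA` is an injective star-ring
homomorphism of 3×3 matrices (`symA_conj_mul`, `symA_conj_conjTranspose`, `symA_conj_injective`). Applying it to both
sides of the voltage-drop equation gives the transformed equation, and the voltage bounds agree
because `symA` undoes the conjugation (`symA_unconj`). The transformed 6×6 block matrix is the
congruence of the original one by the invertible `diag(symA, symA)` (`fromBlocks_symA_conj`), and
congruence by an invertible matrix preserves both positive semidefiniteness and rank.
-/

open Matrix ComplexOrder

noncomputable def ω : ℂ := Complex.exp (2 * Real.pi * Complex.I / 3)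

noncomputable def symA : Matrix (Fin 3) (Fin 3) ℂ :=
  ((Real.sqrt 3 : ℂ)⁻¹) • !![1, 1, 1; 1, ω^2, ω; 1, ω, ω^2]

theorem omega_pow_three : ω ^ 3 = 1 := by
  rw [ω, ← Complex.exp_nat_mul, ← Complex.exp_two_pi_mul_I]
  congr 1
  push_cast
  ring

theorem omega_ne_one : ω ≠ 1 := by
  have h : IsPrimitiveRoot ω 3 := by
    simpa [ω] using Complex.isPrimitiveRoot_exp 3 (by norm_num)
  exact h.ne_one (by norm_num)

theorem one_add_omega_add_sq : 1 + ω + ω ^ 2 = 0 := by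
  have h : (ω - 1) * (1 + ω + ω ^ 2) = 0 := by linear_combination omega_pow_three
  exact (mul_eq_zero.mp h).resolve_left (sub_ne_zero.mpr omega_ne_one)

theorem star_omega : star ω = ω ^ 2 := by
  have hn : ‖ω‖ = 1 := Complex.norm_eq_one_of_pow_eq_one omega_pow_three (by norm_num)
  have h1 : star ω * ω = 1 := by
    have := Complex.conj_mul' ω
    rw [hn] at this
    simpa using this
  linear_combination ω ^ 2 * h1 - star ω * omega_pow_three

/-- `symA` is unitary: the rows are orthonormal because `1 + ω + ω² = 0`, `ω³ = 1`
and complex conjugation sends `ω` to `ω²`. -/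
theorem symA_mul_conjTranspose : symA * symAᴴ = 1 := by
  have hs : ((Real.sqrt 3 : ℂ)⁻¹) * ((Real.sqrt 3 : ℂ)⁻¹) = 3⁻¹ := by
    rw [← mul_inv, ← Complex.ofReal_mul, Real.mul_self_sqrt (by norm_num)]
    norm_num
  have h3 := omega_pow_three
  have h0 := one_add_omega_add_sq
  have hω : (starRingEnd ℂ) ω = ω ^ 2 := star_omega
  have key : (!![1, 1, 1; 1, ω^2, ω; 1, ω, ω^2] : Matrix (Fin 3) (Fin 3) ℂ) *
      (!![1, 1, 1; 1, ω^2, ω; 1, ω, ω^2] : Matrix (Fin 3) (Fin 3) ℂ)ᴴ = (3 : ℂ) • 1 := by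
    ext i j
    fin_cases i <;> fin_cases j <;>
      simp [Matrix.mul_apply, Fin.sum_univ_three, hω] <;> grind
  have hstar : star ((Real.sqrt 3 : ℂ)⁻¹) = (Real.sqrt 3 : ℂ)⁻¹ := by simp
  rw [symA, conjTranspose_smul, hstar, Matrix.smul_mul, Matrix.mul_smul, key, smul_smul,
    smul_smul, hs]
  norm_num

theorem symA_conj_mul (X Y : Matrix (Fin 3) (Fin 3) ℂ) :
    (symAᴴ * X * symA) * (symAᴴ * Y * symA) = symAᴴ * (X * Y) * symA := by
  calc _ = symAᴴ * X * (symA * symAᴴ) * Y * symA := by simp only [Matrix.mul_assoc]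
    _ = _ := by rw [symA_mul_conjTranspose]; simp only [Matrix.mul_assoc, Matrix.one_mul]

theorem symA_conj_conjTranspose (X : Matrix (Fin 3) (Fin 3) ℂ) :
    (symAᴴ * X * symA)ᴴ = symAᴴ * Xᴴ * symA := by
  simp [Matrix.mul_assoc]

theorem symA_unconj (X : Matrix (Fin 3) (Fin 3) ℂ) :
    symA * (symAᴴ * X * symA) * symAᴴ = X := by
  calc _ = (symA * symAᴴ) * X * (symA * symAᴴ) := by simp only [Matrix.mul_assoc]
    _ = X := by simp [symA_mul_conjTranspose]

theorem symA_conj_injective :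
    Function.Injective fun X : Matrix (Fin 3) (Fin 3) ℂ => symAᴴ * X * symA := by
  intro X Y h
  rw [← symA_unconj X, ← symA_unconj Y]
  exact congrArg (fun M => symA * M * symAᴴ) h

/-- The block-diagonal matrix `diag(A, A)`, which acts on the 6×6 block matrices. -/
noncomputable def blockA : Matrix (Fin 3 ⊕ Fin 3) (Fin 3 ⊕ Fin 3) ℂ :=
  fromBlocks symA 0 0 symA

theorem isUnit_blockA : IsUnit blockA := by
  refine IsUnit.of_mul_eq_one blockAᴴ ?_
  simp [blockA, fromBlocks_conjTranspose, fromBlocks_multiply, symA_mul_conjTranspose]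

theorem fromBlocks_symA_conj (vi S l : Matrix (Fin 3) (Fin 3) ℂ) :
    fromBlocks (symAᴴ * vi * symA) (symAᴴ * S * symA) (symAᴴ * S * symA)ᴴ (symAᴴ * l * symA) =
      blockAᴴ * fromBlocks vi S Sᴴ l * blockA := by
  simp [blockA, fromBlocks_conjTranspose, fromBlocks_multiply, Matrix.mul_assoc]

theorem bfm_constraints_iff_sym_constraints
    (z : Matrix (Fin 3) (Fin 3) ℂ) (vlo vhi : Fin 3 → ℝ)
    (vi vj S l : Matrix (Fin 3) (Fin 3) ℂ)
    (hvi : vi.IsHermitian) (hvj : vj.IsHermitian) (hl : l.IsHermitian) :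
    (vj = vi - (S * zᴴ + Sᴴ * z) + z * l * zᴴ ∧
     (∀ p, (vlo p : ℂ) ≤ vi.diag p ∧ vi.diag p ≤ (vhi p : ℂ)) ∧
     (Matrix.fromBlocks vi S Sᴴ l).PosSemidef ∧
     (Matrix.fromBlocks vi S Sᴴ l).rank = 1)
    ↔
    ((symAᴴ * vj * symA) =
        (symAᴴ * vi * symA)
          - ((symAᴴ * S * symA) * (symAᴴ * z * symA)ᴴ
              + (symAᴴ * S * symA)ᴴ * (symAᴴ * z * symA))
          + (symAᴴ * z * symA) * (symAᴴ * l * symA) * (symAᴴ * z * symA)ᴴ ∧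
     (∀ p, (vlo p : ℂ) ≤ (symA * (symAᴴ * vi * symA) * symAᴴ).diag p ∧
            (symA * (symAᴴ * vi * symA) * symAᴴ).diag p ≤ (vhi p : ℂ)) ∧
     (Matrix.fromBlocks (symAᴴ * vi * symA) (symAᴴ * S * symA)
        (symAᴴ * S * symA)ᴴ (symAᴴ * l * symA)).PosSemidef ∧
     (Matrix.fromBlocks (symAᴴ * vi * symA) (symAᴴ * S * symA)
        (symAᴴ * S * symA)ᴴ (symAᴴ * l * symA)).rank = 1) := by
  rw [fromBlocks_symA_conj]
  simp only [symA_unconj, symA_conj_conjTranspose, symA_conj_mul]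
  have hdet : IsUnit blockA.det := (isUnit_iff_isUnit_det _).mp isUnit_blockA
  have hdet' : IsUnit blockAᴴ.det := by
    rw [det_conjTranspose]
    exact hdet.star
  have hrank : (blockAᴴ * fromBlocks vi S Sᴴ l * blockA).rank = (fromBlocks vi S Sᴴ l).rank := by
    rw [rank_mul_eq_left_of_isUnit_det _ _ hdet, rank_mul_eq_right_of_isUnit_det _ _ hdet']
  have hkvl : symAᴴ * vj * symA = symAᴴ * vi * symA
        - (symAᴴ * (S * zᴴ) * symA + symAᴴ * (Sᴴ * z) * symA) + symAᴴ * (z * l * zᴴ) * symA ↔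
      vj = vi - (S * zᴴ + Sᴴ * z) + z * l * zᴴ := by
    rw [← symA_conj_injective.eq_iff (a := vj)]
    simp only [Matrix.mul_add, Matrix.mul_sub, Matrix.add_mul, Matrix.sub_mul]
  have hpsd : (blockAᴴ * fromBlocks vi S Sᴴ l * blockA).PosSemidef ↔
      (fromBlocks vi S Sᴴ l).PosSemidef :=
    IsUnit.posSemidef_star_left_conjugate_iff isUnit_blockA
  rw [hrank, hkvl, hpsd]
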